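/- Let N ≥ 1, let W ∈ Sp(2N,ℝ), and let S* ∈ Sp(2N,ℝ) satisfy the critical point equation (S*)ᵀS* − ((S*)ᵀS*)⁻¹ = (S*)ᵀW − ((S*)ᵀW)⁻¹ together with S* ≠ W. Then the restriction of the cost function 𝒥(S) = Tr[(S − W)ᵀ(S − W)] to the symplectic group Sp(2N,ℝ) (with the subspace topology inherited from the space of real 2N×2N matrices) has neither a local minimum nor a local maximum at S*. In particular, S* = W is the unique local minimum of 𝒥 on Sp(2N,ℝ) and every other critical point is a saddle. -/

import Mathlib

open Matrix

/-- `J` denotes the 2N×2N real matrix with block form [[0, I_N], [−I_N, 0]]. -/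
noncomputable def J (N : ℕ) : Matrix (Fin N ⊕ Fin N) (Fin N ⊕ Fin N) ℝ :=
  Matrix.fromBlocks 0 1 (-1) 0

/-- The cost function `𝒥(S) = Tr[(S − W)ᵀ(S − W)]` restricted to the symplectic group
(with the subspace topology). -/
noncomputable def costOnSp (N : ℕ) (W : Matrix (Fin N ⊕ Fin N) (Fin N ⊕ Fin N) ℝ)
    (S : {S : Matrix (Fin N ⊕ Fin N) (Fin N ⊕ Fin N) ℝ // Sᵀ * J N * S = J N}) : ℝ :=
  (((S : Matrix (Fin N ⊕ Fin N) (Fin N ⊕ Fin N) ℝ) - W)ᵀ *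
    ((S : Matrix (Fin N ⊕ Fin N) (Fin N ⊕ Fin N) ℝ) - W)).trace


section Helpers

set_option linter.unusedSectionVars false

variable {n : Type*} [Fintype n] [DecidableEq n]

lemma aux_trace_nonneg (A : Matrix n n ℝ) : 0 ≤ (Aᵀ * A).trace := by
  have h := (Matrix.posSemidef_conjTranspose_mul_self A).trace_nonneg
  simpa [Matrix.conjTranspose_eq_transpose_of_trivial] using h

lemma aux_trace_eq_zero {A : Matrix n n ℝ} (h : (Aᵀ * A).trace = 0) : A = 0 := by
  have h1 := Matrix.trace_conjTranspose_mul_self_eq_zero_iff (A := A)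
  rw [Matrix.conjTranspose_eq_transpose_of_trivial] at h1
  exact h1.1 h

lemma aux_trace_pos {A : Matrix n n ℝ} (h : A ≠ 0) : 0 < (Aᵀ * A).trace :=
  lt_of_le_of_ne (aux_trace_nonneg A) (fun hz => h (aux_trace_eq_zero hz.symm))

lemma aux_dot_pos {v : n → ℝ} (h : v ≠ 0) : 0 < v ⬝ᵥ v := by
  have h1 := Matrix.dotProduct_star_self_pos_iff (v := v)
  simpa using h1.2 h

/-- The critical point equation forces `M` to commute with `P`. -/
lemma aux_commute {S T M Mi : Matrix n n ℝ}
    (hST : S * T = 1) (hMMi : M * Mi = 1)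
    (hc : Sᵀ * S - T * Tᵀ = M - Mi) : M * (Sᵀ * S) = (Sᵀ * S) * M := by
  have hTS : T * S = 1 := mul_eq_one_comm.1 hST
  have hMiM : Mi * M = 1 := mul_eq_one_comm.1 hMMi
  have hSTt : Tᵀ * Sᵀ = 1 := by rw [← transpose_mul, hST, transpose_one]
  have hTSt : Sᵀ * Tᵀ = 1 := by rw [← transpose_mul, hTS, transpose_one]
  set P := Sᵀ * S with hP
  set Q := T * Tᵀ with hQ
  have hPQ : P * Q = 1 := by
    rw [hP, hQ, Matrix.mul_assoc, ← Matrix.mul_assoc S, hST, Matrix.one_mul, hTSt]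
  have hQP : Q * P = 1 := mul_eq_one_comm.1 hPQ
  have hK : M * (P - Q) = (P - Q) * M := by
    rw [hc, mul_sub, sub_mul, hMMi, hMiM]
  set C := M * P - P * M with hC
  have h1 : P * C * P + C = 0 := by
    have e1 : P * (M * Q - Q * M) * P = P * M - M * P := by
      rw [mul_sub, sub_mul]
      have a1 : P * (M * Q) * P = P * M * (Q * P) := by noncomm_ring
      have a2 : P * (Q * M) * P = (P * Q) * (M * P) := by noncomm_ring
      rw [a1, a2, hQP, hPQ]; noncomm_ring
    have e2 : C = M * Q - Q * M := by
      rw [hC]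
      have : M * P - M * Q = P * M - Q * M := by rw [← mul_sub, hK, sub_mul]
      rw [sub_eq_sub_iff_add_eq_add] at this ⊢
      rw [this]; abel
    nth_rewrite 1 [e2]
    rw [e1, hC]; abel
  have h2 : ((S * C * Sᵀ)ᵀ * (S * C * Sᵀ)).trace + (Cᵀ * C).trace = 0 := by
    have e : ((S * C * Sᵀ)ᵀ * (S * C * Sᵀ)).trace = (Cᵀ * (P * C * P)).trace := by
      rw [transpose_mul, transpose_mul, transpose_transpose]
      have : S * (Cᵀ * Sᵀ) * (S * C * Sᵀ) = S * (Cᵀ * Sᵀ * S * C * Sᵀ) := by noncomm_ring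
      rw [this, trace_mul_comm, hP]
      congr 1; noncomm_ring
    rw [e, ← trace_add, ← mul_add, h1]; simp
  have h3 : C = 0 := by
    apply aux_trace_eq_zero
    have := aux_trace_nonneg (S * C * Sᵀ)
    have := aux_trace_nonneg C
    linarith
  exact sub_eq_zero.1 (hC ▸ h3)

lemma aux_vec {S T M Mi : Matrix n n ℝ}
    (hST : S * T = 1) (hMMi : M * Mi = 1)
    (hc : Sᵀ * S - T * Tᵀ = M - Mi) (hne : Sᵀ * S ≠ M) :
    ∃ w : n → ℝ, w ≠ 0 ∧ w ⬝ᵥ (M *ᵥ w) + w ⬝ᵥ (Mi *ᵥ w) < 0 := by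
  have hcomm := aux_commute hST hMMi hc
  have hTS : T * S = 1 := mul_eq_one_comm.1 hST
  have hMiM : Mi * M = 1 := mul_eq_one_comm.1 hMMi
  have hTSt : Sᵀ * Tᵀ = 1 := by rw [← transpose_mul, hTS, transpose_one]
  set P := Sᵀ * S with hP
  set Q := T * Tᵀ with hQ
  have hPQ : P * Q = 1 := by
    rw [hP, hQ, Matrix.mul_assoc, ← Matrix.mul_assoc S, hST, Matrix.one_mul, hTSt]
  have hQP : Q * P = 1 := mul_eq_one_comm.1 hPQ
  have hMi : Mi = M - P + Q := by
    have : Mi = M - (M - Mi) := by abel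
    rw [this, ← hc]; abel
  have hQM : Q * M = M * Q := by
    calc Q * M = Q * (M * (P * Q)) := by rw [hPQ, mul_one]
      _ = Q * (M * P) * Q := by noncomm_ring
      _ = Q * P * (M * Q) := by rw [hcomm]; noncomm_ring
      _ = M * Q := by rw [hQP, one_mul]
  have hMM : M * M = M * P - M * Q + 1 := by
    have := hMMi
    rw [hMi] at this
    have e : M * (M - P + Q) = M * M - M * P + M * Q := by noncomm_ring
    rw [e] at this
    rw [← this]; abel
  have hMD : M * (P - M) = - (Q * (P - M)) := by
    rw [mul_sub, mul_sub, hMM, hQP, hQM]; abel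
  have hMiD : Mi * (P - M) = - (P * (P - M)) := by
    rw [hMi]
    have : (M - P + Q) * (P - M) = M * (P - M) - P * (P - M) + Q * (P - M) := by noncomm_ring
    rw [this, hMD]; abel
  have hD : P - M ≠ 0 := sub_ne_zero.2 hne
  obtain ⟨z, hz⟩ : ∃ z, (P - M) *ᵥ z ≠ 0 := by
    by_contra! h
    apply hD
    ext i j
    have := congrFun (h (Pi.single j 1)) i
    simpa using this
  refine ⟨(P - M) *ᵥ z, hz, ?_⟩
  set w := (P - M) *ᵥ z with hw
  have e1 : M *ᵥ w = - (Q *ᵥ w) := by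
    rw [hw, mulVec_mulVec, hMD, neg_mulVec, mulVec_mulVec]
  have e2 : Mi *ᵥ w = - (P *ᵥ w) := by
    rw [hw, mulVec_mulVec, hMiD, neg_mulVec, mulVec_mulVec]
  have key : ∀ (B : Matrix n n ℝ), w ⬝ᵥ ((Bᵀ * B) *ᵥ w) = (B *ᵥ w) ⬝ᵥ (B *ᵥ w) := by
    intro B
    rw [← mulVec_mulVec, dotProduct_mulVec, vecMul_transpose]
  have p1 : 0 < w ⬝ᵥ (P *ᵥ w) := by
    rw [hP, key]
    apply aux_dot_pos
    intro h0
    apply hz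
    have := congrArg (fun v => T *ᵥ v) h0
    simpa [mulVec_mulVec, hTS] using this
  have p2 : 0 ≤ w ⬝ᵥ (Q *ᵥ w) := by
    have : Q = Tᵀᵀ * Tᵀ := by rw [transpose_transpose]
    rw [this, key]
    exact Finset.sum_nonneg (fun i _ => mul_self_nonneg _)
  rw [e1, e2, dotProduct_neg, dotProduct_neg]
  linarith

lemma aux_cost (S W R : Matrix n n ℝ) :
    ((S * R - W)ᵀ * (S * R - W)).trace
      = ((S * R)ᵀ * (S * R)).trace - 2 * (Wᵀ * S * R).trace + (Wᵀ * W).trace := by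
  have e : (S * R - W)ᵀ * (S * R - W)
      = (S * R)ᵀ * (S * R) - Wᵀ * S * R - (Wᵀ * S * R)ᵀ + Wᵀ * W := by
    simp only [transpose_sub, transpose_mul, transpose_transpose]
    noncomm_ring
  rw [e, trace_add, trace_sub, trace_sub, trace_transpose]; ring

/-- Rotation in a `j`-complex line. -/
lemma aux_rot {j Q R : Matrix n n ℝ} {c s : ℝ} (hj : jᵀ = -j) (hjj : j * j = -1)
    (hQt : Qᵀ = Q) (hQQ : Q * Q = Q) (hjQ : j * Q = Q * j) (hcs : c ^ 2 + s ^ 2 = 1)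
    (hR : R = 1 + (c - 1) • Q + s • (j * Q)) :
    Rᵀ * R = 1 ∧ Rᵀ * j * R = j := by
  have hRt : Rᵀ = 1 + (c - 1) • Q - s • (j * Q) := by
    rw [hR]; simp [hQt, hj, hjQ, sub_eq_add_neg]
  have hjQQ : j * Q * Q = j * Q := by rw [mul_assoc, hQQ]
  have hQjQ : Q * (j * Q) = j * Q := by rw [← mul_assoc, ← hjQ, hjQQ]
  have hjQjQ : j * Q * (j * Q) = -Q := by
    rw [mul_assoc, hQjQ, ← mul_assoc, hjj]; simp
  have h1 : Rᵀ * R = 1 := by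
    rw [hRt, hR]
    simp only [add_mul, sub_mul, mul_add, one_mul, mul_one, smul_mul_assoc, mul_smul_comm,
      hjQQ, hQjQ, hjQjQ, hQQ, smul_neg]
    have hs : s * s = 1 - c * c := by nlinarith
    have e : (1 + (c - 1) • Q - s • (j * Q) + (c - 1) • (Q + (c - 1) • Q - s • (j * Q)) +
      s • (j * Q + (c - 1) • (j * Q) - -(s • Q))) = 1 + (c * c - 1 + s * s) • Q := by module
    rw [e, hs]
    module
  refine ⟨h1, ?_⟩
  have h2 : j * R = R * j := by
    rw [hR]
    simp only [mul_add, add_mul, mul_one, one_mul, mul_smul_comm, smul_mul_assoc]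
    rw [hjQ, ← mul_assoc, hjQ, mul_assoc Q]
  rw [mul_assoc, h2, ← mul_assoc, h1, one_mul]

end Helpers

lemma JN_transpose (N : ℕ) : (J N)ᵀ = - J N := by
  simp [_root_.J, fromBlocks_transpose, fromBlocks_neg]

lemma J_mul_J (N : ℕ) : J N * J N = -1 := by
  rw [← fromBlocks_one, _root_.J, fromBlocks_multiply, fromBlocks_neg]; simp

lemma J_inv {N : ℕ} {S : Matrix (Fin N ⊕ Fin N) (Fin N ⊕ Fin N) ℝ}
    (hS : Sᵀ * J N * S = J N) : (-(J N * Sᵀ * J N)) * S = 1 := by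
  rw [neg_mul, mul_assoc, mul_assoc, ← mul_assoc Sᵀ, hS, J_mul_J, neg_neg]

lemma J_transpose_sympl {N : ℕ} {S : Matrix (Fin N ⊕ Fin N) (Fin N ⊕ Fin N) ℝ}
    (hS : Sᵀ * J N * S = J N) : S * J N * Sᵀ = J N := by
  have h := mul_eq_one_comm.1 (J_inv hS)
  have h2 := congrArg (fun X => X * J N) h
  have e : S * (-(J N * Sᵀ * J N)) * J N = - (S * J N * Sᵀ * (J N * J N)) := by noncomm_ring
  simp only [e, J_mul_J, one_mul] at h2
  simpa using h2

lemma mul_sympl {N : ℕ} {S R : Matrix (Fin N ⊕ Fin N) (Fin N ⊕ Fin N) ℝ}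
    (hS : Sᵀ * J N * S = J N) (hR : Rᵀ * J N * R = J N) :
    (S * R)ᵀ * J N * (S * R) = J N := by
  have e : (S * R)ᵀ * J N * (S * R) = Rᵀ * (Sᵀ * J N * S) * R := by
    rw [transpose_mul]; noncomm_ring
  rw [e, hS, hR]

/-- The curve `t ↦ S R(t)` in the symplectic group tends to `S`. -/
lemma curve_tendsto {N : ℕ} {S : Matrix (Fin N ⊕ Fin N) (Fin N ⊕ Fin N) ℝ}
    (hS : Sᵀ * J N * S = J N) (R : ℝ → Matrix (Fin N ⊕ Fin N) (Fin N ⊕ Fin N) ℝ)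
    (hR : ∀ t, (R t)ᵀ * J N * R t = J N) (hc : Continuous R) (h0 : R 0 = 1) :
    Filter.Tendsto (fun t => (⟨S * R t, mul_sympl hS (hR t)⟩ :
      {S : Matrix (Fin N ⊕ Fin N) (Fin N ⊕ Fin N) ℝ // Sᵀ * J N * S = J N}))
      (nhds 0) (nhds ⟨S, hS⟩) := by
  have hcont : Continuous (fun t => (⟨S * R t, mul_sympl hS (hR t)⟩ :
      {S : Matrix (Fin N ⊕ Fin N) (Fin N ⊕ Fin N) ℝ // Sᵀ * J N * S = J N})) :=
    Continuous.subtype_mk (continuous_const.matrix_mul hc) _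
  have := hcont.tendsto 0
  have e : (⟨S * R 0, mul_sympl hS (hR 0)⟩ :
      {S : Matrix (Fin N ⊕ Fin N) (Fin N ⊕ Fin N) ℝ // Sᵀ * J N * S = J N}) = ⟨S, hS⟩ := by
    apply Subtype.ext; simp [h0]
  rwa [e] at this

/-- If a property holds near `0`, it holds at `t` and `-t` for some small positive `t`. -/
lemma exists_small {p : ℝ → Prop} (h : ∀ᶠ t in nhds (0 : ℝ), p t) :
    ∃ t : ℝ, 0 < t ∧ t < 1 ∧ p t ∧ p (-t) := by
  obtain ⟨ε, hε, H⟩ := Metric.eventually_nhds_iff.1 h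
  refine ⟨min (ε / 2) (1 / 2), by positivity, ?_, H ?_, H ?_⟩
  · exact lt_of_le_of_lt (min_le_right _ _) (by norm_num)
  all_goals
    have h1 : 0 < min (ε / 2) (1 / 2) := by positivity
    have h2 : min (ε / 2) (1 / 2) < ε := lt_of_le_of_lt (min_le_left _ _) (by linarith)
    simp only [Real.dist_eq, sub_zero, abs_neg]
    rwa [abs_of_pos h1]

lemma not_max (N : ℕ) (hN : 1 ≤ N)
    (W : Matrix (Fin N ⊕ Fin N) (Fin N ⊕ Fin N) ℝ)
    (S : Matrix (Fin N ⊕ Fin N) (Fin N ⊕ Fin N) ℝ)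
    (hS : Sᵀ * J N * S = J N) :
    ¬ IsLocalMax (costOnSp N W) ⟨S, hS⟩ := by
  intro hmax
  set A : Matrix (Fin N ⊕ Fin N) (Fin N ⊕ Fin N) ℝ := fromBlocks 0 1 0 0 with hA
  have hA1 : Aᵀ * J N + J N * A = 0 := by
    rw [hA, _root_.J, fromBlocks_transpose, fromBlocks_multiply, fromBlocks_multiply, fromBlocks_add,
      ← fromBlocks_zero]
    simp
  have hA2 : Aᵀ * J N * A = 0 := by
    rw [hA, _root_.J, fromBlocks_transpose, fromBlocks_multiply, fromBlocks_multiply,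
      ← fromBlocks_zero]
    simp
  have hA0 : A ≠ 0 := by
    intro h
    have := congrFun (congrFun h (Sum.inl ⟨0, hN⟩)) (Sum.inr ⟨0, hN⟩)
    simp [hA] at this
  have hR : ∀ t : ℝ, (1 + t • A)ᵀ * J N * (1 + t • A) = J N := by
    intro t
    have e : (1 + t • A)ᵀ * J N * (1 + t • A)
        = J N + t • (Aᵀ * J N + J N * A) + (t * t) • (Aᵀ * J N * A) := by
      simp only [transpose_add, transpose_one, transpose_smul, add_mul, mul_add, one_mul, mul_one,
        smul_mul_assoc, mul_smul_comm]
      module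
    rw [e, hA1, hA2]; simp
  have ht := curve_tendsto hS (fun t => 1 + t • A) hR (by fun_prop) (by simp)
  have hev := ht.eventually hmax
  obtain ⟨t, ht0, -, h1, h2⟩ := exists_small hev
  have hSA : S * A ≠ 0 := by
    intro h
    apply hA0
    have := congrArg (fun X => (-(J N * Sᵀ * J N)) * X) h
    simpa only [← mul_assoc, J_inv hS, one_mul, mul_zero] using this
  have hpos := aux_trace_pos hSA
  have e0 : costOnSp N W ⟨S, hS⟩ = ((S * 1 - W)ᵀ * (S * 1 - W)).trace := by
    simp [costOnSp]
  have key : ∀ t : ℝ, ((S * (1 + t • A) - W)ᵀ * (S * (1 + t • A) - W)).trace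
      = ((S * 1 - W)ᵀ * (S * 1 - W)).trace + t * (((S)ᵀ * (S * A)).trace + ((S * A)ᵀ * S).trace
         - 2 * (Wᵀ * S * A).trace) + t * t * ((S * A)ᵀ * (S * A)).trace := by
    intro t
    rw [aux_cost, aux_cost]
    simp only [mul_add, mul_one, transpose_add, add_mul, trace_add, mul_smul_comm, transpose_smul,
      smul_mul_assoc, trace_smul, smul_eq_mul]
    ring
  simp only [e0] at h1 h2
  simp only [costOnSp] at h1 h2
  rw [key] at h1 h2
  have : 0 < t * t * ((S * A)ᵀ * (S * A)).trace := by positivity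
  linarith

lemma not_min (N : ℕ)
    (W : Matrix (Fin N ⊕ Fin N) (Fin N ⊕ Fin N) ℝ) (hW : Wᵀ * J N * W = J N)
    (S : Matrix (Fin N ⊕ Fin N) (Fin N ⊕ Fin N) ℝ)
    (hS : Sᵀ * J N * S = J N)
    (hcrit : Sᵀ * S - (Sᵀ * S)⁻¹ = Sᵀ * W - (Sᵀ * W)⁻¹)
    (hne : S ≠ W) :
    ¬ IsLocalMin (costOnSp N W) ⟨S, hS⟩ := by
  intro hmin
  obtain ⟨T, hTS⟩ : ∃ T, T * S = 1 := ⟨_, J_inv hS⟩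
  obtain ⟨U, hUW⟩ : ∃ U, U * W = 1 := ⟨_, J_inv hW⟩
  have hST : S * T = 1 := mul_eq_one_comm.1 hTS
  set M := Wᵀ * S with hM
  set Mi := T * Uᵀ with hMi
  have hMMi : M * Mi = 1 := by
    rw [hM, hMi, mul_assoc, ← mul_assoc S, hST, one_mul, ← transpose_mul, hUW, transpose_one]
  have hMiM : Mi * M = 1 := mul_eq_one_comm.1 hMMi
  have hinv1 : (Sᵀ * S)⁻¹ = T * Tᵀ := by
    apply inv_eq_right_inv
    rw [mul_assoc, ← mul_assoc S, hST, one_mul, ← transpose_mul, hTS, transpose_one]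
  have hMt : Sᵀ * W = Mᵀ := by rw [hM, transpose_mul, transpose_transpose]
  have hinv2 : (Sᵀ * W)⁻¹ = Miᵀ := by
    apply inv_eq_right_inv
    rw [hMt, ← transpose_mul, hMiM, transpose_one]
  have hc : Sᵀ * S - T * Tᵀ = M - Mi := by
    rw [hinv1, hinv2, hMt] at hcrit
    have := congrArg transpose hcrit
    simpa using this
  have hPM : Sᵀ * S ≠ M := by
    intro h
    apply hne
    have := congrArg (fun X => X * T) h
    simp only [hM, mul_assoc, hST, mul_one] at this
    exact transpose_injective this
  obtain ⟨w, hw0, hw⟩ := aux_vec hST hMMi hc hPM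
  have hn := aux_dot_pos hw0
  set y := J N *ᵥ w with hy
  have hMJM : Mᵀ * J N * M = J N := by
    have e : Mᵀ * J N * M = Sᵀ * (W * J N * Wᵀ) * S := by
      rw [← hMt, hM]; noncomm_ring
    rw [e, J_transpose_sympl hW, hS]
  have hJMJ : (J N)ᵀ * M * J N = Miᵀ := by
    have h1 : Mᵀ * ((J N)ᵀ * M * J N) = 1 := by
      have e : Mᵀ * (-(J N) * M * J N) = -((Mᵀ * J N * M) * J N) := by noncomm_ring
      rw [JN_transpose, e, hMJM, J_mul_J, neg_neg]
    have h2 : Miᵀ * Mᵀ = 1 := by rw [← transpose_mul, hMMi, transpose_one]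
    calc (J N)ᵀ * M * J N = (Miᵀ * Mᵀ) * ((J N)ᵀ * M * J N) := by rw [h2, one_mul]
      _ = Miᵀ * (Mᵀ * ((J N)ᵀ * M * J N)) := by rw [mul_assoc]
      _ = Miᵀ := by rw [h1, mul_one]
  have hyMy : y ⬝ᵥ (M *ᵥ y) = w ⬝ᵥ (Mi *ᵥ w) := by
    have e1 : y ⬝ᵥ (M *ᵥ y) = w ⬝ᵥ (((J N)ᵀ * M * J N) *ᵥ w) := by
      rw [mul_assoc, ← mulVec_mulVec w (J N)ᵀ, dotProduct_mulVec w, vecMul_transpose, hy,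
        mulVec_mulVec]
    rw [e1, hJMJ, dotProduct_mulVec, vecMul_transpose, dotProduct_comm]
  have hJy : J N *ᵥ y = -w := by
    rw [hy, mulVec_mulVec, J_mul_J, neg_mulVec, one_mulVec]
  have hvJ : ∀ v, v ᵥ* J N = -(J N *ᵥ v) := by
    intro v
    rw [← neg_mulVec, ← JN_transpose, mulVec_transpose]
  have hyy : y ⬝ᵥ y = w ⬝ᵥ w := by
    nth_rewrite 2 [hy]
    rw [dotProduct_mulVec, hvJ, hJy, neg_neg]
  have hwy : w ⬝ᵥ y = 0 := by
    have : w ⬝ᵥ y = - (w ⬝ᵥ y) := by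
      calc w ⬝ᵥ y = w ⬝ᵥ (J N *ᵥ w) := by rw [hy]
        _ = (w ᵥ* J N) ⬝ᵥ w := dotProduct_mulVec _ _ _
        _ = (-y) ⬝ᵥ w := by rw [hvJ]
        _ = - (w ⬝ᵥ y) := by rw [neg_dotProduct, dotProduct_comm]
    linarith
  have hyw : y ⬝ᵥ w = 0 := by rw [dotProduct_comm, hwy]
  set Q := (w ⬝ᵥ w)⁻¹ • (vecMulVec w w + vecMulVec y y) with hQ
  have hQt : Qᵀ = Q := by
    simp [hQ, transpose_vecMulVec]
  have hQQ : Q * Q = Q := by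
    rw [hQ]
    simp only [smul_mul_assoc, mul_smul_comm, add_mul, mul_add, vecMulVec_mul_vecMulVec, hyw, hwy,
      hyy, zero_smul, add_zero, zero_add, vecMulVec_smul, smul_add, smul_smul, vecMulVec_zero]
    simp [hn.ne']
  have hJQ : J N * Q = Q * J N := by
    rw [hQ]
    simp only [mul_smul_comm, smul_mul_assoc, mul_add, add_mul, mul_vecMulVec, vecMulVec_mul,
      hvJ, hJy, ← hy, neg_neg, neg_vecMulVec, vecMulVec_neg]
    rw [add_comm]
  have htr : (M * Q).trace < 0 := by
    have : (M * Q).trace = (w ⬝ᵥ w)⁻¹ * (w ⬝ᵥ (M *ᵥ w) + y ⬝ᵥ (M *ᵥ y)) := by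
      rw [hQ]
      simp only [mul_smul_comm, mul_add, mul_vecMulVec, trace_smul, trace_add, trace_vecMulVec,
        smul_eq_mul, dotProduct_comm]
    rw [this, hyMy]
    exact mul_neg_of_pos_of_neg (inv_pos.2 hn) hw
  have hR := fun t : ℝ => aux_rot (JN_transpose N) (J_mul_J N) hQt hQQ hJQ
    (Real.cos_sq_add_sin_sq t) rfl
  have ht := curve_tendsto hS (fun t => 1 + (Real.cos t - 1) • Q + Real.sin t • (J N * Q))
    (fun t => (hR t).2) (by fun_prop) (by simp)
  have hev := ht.eventually hmin
  obtain ⟨t, ht0, ht1, h1, h2⟩ := exists_small hev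
  have e0 : costOnSp N W ⟨S, hS⟩ = ((S * 1 - W)ᵀ * (S * 1 - W)).trace := by
    simp [costOnSp]
  have key : ∀ t : ℝ,
      ((S * (1 + (Real.cos t - 1) • Q + Real.sin t • (J N * Q)) - W)ᵀ *
        (S * (1 + (Real.cos t - 1) • Q + Real.sin t • (J N * Q)) - W)).trace
      = ((S * 1 - W)ᵀ * (S * 1 - W)).trace - 2 * (Real.cos t - 1) * (M * Q).trace
        - 2 * Real.sin t * (M * (J N * Q)).trace := by
    intro t
    rw [aux_cost, aux_cost, ← hM]
    have hRR := mul_eq_one_comm.1 (hR t).1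
    set R := 1 + (Real.cos t - 1) • Q + Real.sin t • (J N * Q) with hRdef
    have e1 : ((S * R)ᵀ * (S * R)).trace = ((S * 1)ᵀ * (S * 1)).trace := by
      rw [trace_mul_comm, transpose_mul]
      have : S * R * (Rᵀ * Sᵀ) = S * (R * Rᵀ) * Sᵀ := by noncomm_ring
      rw [this, hRR, mul_one, trace_mul_comm]
    rw [e1, hRdef]
    simp only [mul_add, mul_one, trace_add, mul_smul_comm, trace_smul, smul_eq_mul]
    ring
  simp only [e0] at h1 h2
  simp only [costOnSp] at h1 h2
  rw [key] at h1 h2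
  rw [Real.cos_neg, Real.sin_neg] at h2
  have hcos : Real.cos t < 1 := by
    have := Real.cos_lt_cos_of_nonneg_of_le_pi (le_refl 0)
      (by linarith [Real.pi_gt_three] : t ≤ Real.pi) ht0
    simpa using this
  nlinarith

/-- At any critical point `S* ≠ W` of the cost `𝒥(S) = Tr[(S − W)ᵀ(S − W)]` on the
symplectic group, `𝒥` has neither a local minimum nor a local maximum: every such
critical point is a saddle, so `S* = W` is the unique local minimum. -/
theorem stmt_15 (N : ℕ) (hN : 1 ≤ N)
    (W : Matrix (Fin N ⊕ Fin N) (Fin N ⊕ Fin N) ℝ) (hW : Wᵀ * J N * W = J N)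
    (Sstar : Matrix (Fin N ⊕ Fin N) (Fin N ⊕ Fin N) ℝ)
    (hSstar : Sstarᵀ * J N * Sstar = J N)
    (hcrit : Sstarᵀ * Sstar - (Sstarᵀ * Sstar)⁻¹ = Sstarᵀ * W - (Sstarᵀ * W)⁻¹)
    (hne : Sstar ≠ W) :
    ¬ IsLocalMin (costOnSp N W) ⟨Sstar, hSstar⟩ ∧
    ¬ IsLocalMax (costOnSp N W) ⟨Sstar, hSstar⟩ := by
  exact ⟨not_min N W hW Sstar hSstar hcrit hne, not_max N hN W Sstar hSstar⟩
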